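/- For all integers k ≥ 2 and n ≥ 1, every probability vector p with all p_i > 0, and every real t > k−1, setting λ̂ := min{ 1 − (k−1)/t + (k/(k−1)) · (t − k + 1)/n , 1 }, the tail probability satisfies P(n·D(p̂‖p) > t) ≤ exp(−λ̂ t) · G_{k,n}(λ̂). -/

import Mathlib

/-!
The bound is Chernoff's inequality `P(nD > t) ≤ exp(-λt) E[exp(λ n D)]` for `0 ≤ λ ≤ 1`, combined
with the estimate `E[exp(λ n D(p̂‖p))] ≤ G_{k,n}(λ)`; the prescribed `λ̂` always lies in `[0, 1]`.

For the moment generating function (`phi_le_Gfun`), weighted AM-GM applied coordinatewise gives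
`pᵢ^(1-λ) (Xᵢ/n)^λ ≤ λ Xᵢ/n + (1-λ) pᵢ`, so it is at most
`∑_X (n choose X) ∏ᵢ (λ Xᵢ/n + (1-λ) pᵢ)^Xᵢ`.

This last sum does not depend on `p` and equals `G_{k,n}(λ)` (`Gfun_eq_Gpoly`). The reason is the
Abel–Cauchy identity (`sum_abelTerm_mul`)
`∑_{x+y=n} (a+bx)^x/x! · (c+by)^y/y! = ∑_{i+j=n} b^i (a+c+nb)^j/j!`,
whose two sides are symmetric in `a, c`, have, by induction on `n`, the same derivative in `a`, and
agree at `a = 0`, `c = -nb`, where the left side is an `n`-th finite difference of `x ↦ xⁿ`. Adding one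
coordinate at a time and summing multiset coefficients (the hockey-stick identity) yields the
`k`-fold version `sum_prod_abelTerm`, which is then used with `b = λ/n`, `aᵢ = (1-λ)pᵢ`, so that
`∑ aᵢ + nb = 1`.
-/

open Finset

/-- The polynomial `G_{k,n}(λ) = ∑_{m=0}^n (n!/(n^m (n-m)!)) C(m+k-2, k-2) λ^m`. -/
noncomputable def Gpoly (k n : ℕ) (l : ℝ) : ℝ :=
  ∑ m ∈ Finset.range (n + 1),
    (Nat.factorial n : ℝ) / ((n : ℝ) ^ m * (Nat.factorial (n - m) : ℝ)) *
      (Nat.choose (m + k - 2) (k - 2) : ℝ) * l ^ m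
/-- `G_{k,n}(λ, p)`: sum over tuples of nonnegative integers summing to `n` of the
multinomial coefficient times `∏ i (λ Xᵢ/n + (1-λ) pᵢ)^{Xᵢ}` (with `0^0 = 1`). -/
noncomputable def Gfun (k n : ℕ) (l : ℝ) (p : Fin k → ℝ) : ℝ :=
  ∑ X ∈ Finset.Nat.antidiagonalTuple k n,
    (Nat.multinomial Finset.univ X : ℝ) *
      ∏ i, (l * (X i : ℝ) / (n : ℝ) + (1 - l) * p i) ^ (X i)
/-- Multinomial probability of the tuple of counts `X` under probability vector `p`. -/
noncomputable def multP (k : ℕ) (p : Fin k → ℝ) (X : Fin k → ℕ) : ℝ :=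
  (Nat.multinomial Finset.univ X : ℝ) * ∏ i, p i ^ (X i)

/-- Relative entropy `D(p̂ ‖ p)` of the empirical distribution `X/n` w.r.t. `p`
(with the convention `0 · log 0 = 0`, automatic since `Real.log 0 = 0`). -/
noncomputable def relEnt (k n : ℕ) (p : Fin k → ℝ) (X : Fin k → ℕ) : ℝ :=
  ∑ i, ((X i : ℝ) / (n : ℝ)) * Real.log ((X i : ℝ) / ((n : ℝ) * p i))

/-- Moment generating function `φ_{k,n}(λ, p) = E exp(λ n D(p̂‖p))`. -/
noncomputable def phi (k n : ℕ) (l : ℝ) (p : Fin k → ℝ) : ℝ :=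
  ∑ X ∈ Finset.Nat.antidiagonalTuple k n,
    multP k p X * Real.exp (l * (n : ℝ) * relEnt k n p X)

open scoped Classical in
/-- Tail probability `P(n D(p̂‖p) > t)`. -/
noncomputable def tailP (k n : ℕ) (p : Fin k → ℝ) (t : ℝ) : ℝ :=
  ∑ X ∈ (Finset.Nat.antidiagonalTuple k n).filter
      (fun X => t < (n : ℝ) * relEnt k n p X),
    multP k p X

/-! ### The Abel–Cauchy identity -/

/-- The normalized Abel term `(a + b x)^x / x!`. -/
noncomputable def abelTerm (b a : ℝ) (x : ℕ) : ℝ :=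
  (a + b * x) ^ x / (Nat.factorial x : ℝ)

lemma abelTerm_zero (b a : ℝ) : abelTerm b a 0 = 1 := by
  simp [abelTerm]

lemma hasDerivAt_pow_div_factorial (d a : ℝ) (x : ℕ) :
    HasDerivAt (fun a : ℝ => (a + d) ^ (x + 1) / ((x + 1).factorial : ℝ))
      ((a + d) ^ x / (x.factorial : ℝ)) a := by
  have h := (((hasDerivAt_id a).add_const d).fun_pow (x + 1)).div_const ((x + 1).factorial : ℝ)
  refine h.congr_deriv ?_
  have h1 : (x.factorial : ℝ) ≠ 0 := by positivity
  have h2 : (x : ℝ) + 1 ≠ 0 := by positivity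
  simp only [Nat.factorial_succ, id_eq, Nat.add_sub_cancel]
  push_cast
  field_simp

/-- Abel terms form an Appell-like sequence: differentiation lowers the index and shifts `a`
by `b`. -/
lemma hasDerivAt_abelTerm (b a : ℝ) (x : ℕ) :
    HasDerivAt (fun a => abelTerm b a (x + 1)) (abelTerm b (a + b) x) a := by
  have h := hasDerivAt_pow_div_factorial (b * ((x + 1 : ℕ) : ℝ)) a x
  refine h.congr_deriv ?_
  rw [abelTerm]
  push_cast
  ring_nf

/-- The Abel–Cauchy identity at `a = 0`, `c = -nb`: an `n`-th finite difference of `x ↦ xⁿ`. -/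
lemma sum_abelTerm_mul_base (b : ℝ) (n : ℕ) :
    ∑ x ∈ antidiagonal n, abelTerm b 0 x.1 * abelTerm b (-(n * b)) x.2 = b ^ n := by
  have h := congrFun (fwdDiff_iter_eq_factorial (R := ℝ) (n := n)) 0
  rw [fwdDiff_iter_eq_sum_shift] at h
  have hf : (n.factorial : ℝ) ≠ 0 := by positivity
  rw [Finset.Nat.sum_antidiagonal_eq_sum_range_succ
    (fun i j => abelTerm b 0 i * abelTerm b (-(n * b)) j)]
  have key : ∀ x ∈ range (n + 1), abelTerm b 0 x * abelTerm b (-(n * b)) (n - x) =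
      b ^ n / n.factorial * (((-1 : ℤ) ^ (n - x) * n.choose x) • ((0 : ℝ) + x • (1 : ℝ)) ^ n) := by
    intro x hx
    have hx : x ≤ n := Nat.lt_succ_iff.mp (mem_range.mp hx)
    have hc : (-(n * b) + b * ((n - x : ℕ) : ℝ)) = -1 * (b * x) := by
      rw [Nat.cast_sub hx]; ring
    have hp : (b * x : ℝ) ^ n = (b * x) ^ x * (b * x) ^ (n - x) := by
      rw [← pow_add]; congr 1; omega
    simp only [abelTerm, hc, zero_add, mul_pow (-1 : ℝ), zsmul_eq_mul, nsmul_eq_mul, mul_one]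
    push_cast
    rw [Nat.cast_choose ℝ hx]
    have h1 : (x.factorial : ℝ) ≠ 0 := by positivity
    have h2 : ((n - x).factorial : ℝ) ≠ 0 := by positivity
    field_simp
    rw [← mul_pow b, hp]
  rw [sum_congr rfl key, ← mul_sum, h]
  simp
  field_simp

/-- The Abel–Cauchy identity. -/
lemma sum_abelTerm_mul (b : ℝ) (n : ℕ) : ∀ a c : ℝ,
    ∑ x ∈ antidiagonal n, abelTerm b a x.1 * abelTerm b c x.2 =
      ∑ x ∈ antidiagonal n, b ^ x.1 * ((a + c + n * b) ^ x.2 / (x.2.factorial : ℝ)) := by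
  induction n with
  | zero => intro a c; simp [abelTerm]
  | succ n ih =>
    -- the difference of the two sides; it is symmetric and constant in each argument
    let F : ℝ → ℝ → ℝ := fun c a =>
      ∑ x ∈ antidiagonal (n + 1), abelTerm b a x.1 * abelTerm b c x.2 -
      ∑ x ∈ antidiagonal (n + 1),
        b ^ x.1 * ((a + c + (n + 1 : ℕ) * b) ^ x.2 / (x.2.factorial : ℝ))
    have hF : ∀ c a, HasDerivAt (F c) 0 a := by
      intro c a
      have e : F c = fun a => (abelTerm b c (n + 1) +
          ∑ x ∈ antidiagonal n, abelTerm b a (x.1 + 1) * abelTerm b c x.2) -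
          (b ^ (n + 1) + ∑ x ∈ antidiagonal n, b ^ x.1 *
            ((a + (c + (n + 1 : ℕ) * b)) ^ (x.2 + 1) / ((x.2 + 1).factorial : ℝ))) := by
        funext a
        simp only [F]
        rw [Finset.Nat.sum_antidiagonal_succ, Finset.Nat.sum_antidiagonal_succ']
        simp [abelTerm_zero, add_assoc]
      rw [e]
      have h1 : HasDerivAt (fun a => abelTerm b c (n + 1) +
          ∑ x ∈ antidiagonal n, abelTerm b a (x.1 + 1) * abelTerm b c x.2)
          (∑ x ∈ antidiagonal n, abelTerm b (a + b) x.1 * abelTerm b c x.2) a :=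
        (HasDerivAt.fun_sum fun x _ =>
          (hasDerivAt_abelTerm b a x.1).mul_const (abelTerm b c x.2)).const_add _
      have h2 : HasDerivAt (fun a => b ^ (n + 1) + ∑ x ∈ antidiagonal n, b ^ x.1 *
            ((a + (c + (n + 1 : ℕ) * b)) ^ (x.2 + 1) / ((x.2 + 1).factorial : ℝ)))
          (∑ x ∈ antidiagonal n, b ^ x.1 *
            ((a + (c + (n + 1 : ℕ) * b)) ^ x.2 / (x.2.factorial : ℝ))) a :=
        (HasDerivAt.fun_sum fun x _ =>
          (hasDerivAt_pow_div_factorial (c + (n + 1 : ℕ) * b) a x.2).const_mul (b ^ x.1)).const_add _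
      refine (h1.fun_sub h2).congr_deriv ?_
      rw [ih (a + b) c, sub_eq_zero]
      have e2 : a + b + c + n * b = a + (c + (n + 1 : ℕ) * b) := by push_cast; ring
      rw [e2]
    have hconst : ∀ c a a', F c a = F c a' := fun c a a' =>
      is_const_of_deriv_eq_zero (fun x => (hF c x).differentiableAt) (fun x => (hF c x).deriv) a a'
    have hsymm : ∀ c a, F c a = F a c := by
      intro c a
      simp only [F]
      rw [← Finset.Nat.sum_antidiagonal_swap, add_comm a c]
      simp only [Prod.fst_swap, Prod.snd_swap]
      congr 1
      exact sum_congr rfl fun x _ => mul_comm _ _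
    have hbase : F (-((n + 1 : ℕ) * b)) 0 = 0 := by
      simp only [F]
      rw [sum_abelTerm_mul_base, Finset.Nat.sum_antidiagonal_succ']
      simp
    intro a c
    have : F c a = 0 := by
      rw [hconst c a (-((n + 1 : ℕ) * b)), hsymm, hconst _ c 0, hbase]
    exact sub_eq_zero.mp this

/-! ### The identity for several coordinates -/

lemma sum_antidiagonalTuple_succ (k n : ℕ) (f : (Fin (k + 1) → ℕ) → ℝ) :
    ∑ X ∈ Finset.Nat.antidiagonalTuple (k + 1) n, f X =
      ∑ x ∈ antidiagonal n, ∑ Y ∈ Finset.Nat.antidiagonalTuple k x.2, f (Fin.cons x.1 Y) := by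
  rw [Finset.sum_sigma']
  refine Finset.sum_nbij' (fun X => ⟨(X 0, ∑ i, X (Fin.succ i)), fun i => X (Fin.succ i)⟩)
    (fun s => Fin.cons s.1.1 s.2) ?_ ?_ ?_ ?_ ?_
  · intro X hX
    simpa [Finset.Nat.mem_antidiagonalTuple, Fin.sum_univ_succ] using hX
  · rintro ⟨⟨x, y⟩, Y⟩ hs
    simp only [mem_sigma, HasAntidiagonal.mem_antidiagonal, Finset.Nat.mem_antidiagonalTuple] at hs ⊢
    simp [Fin.sum_univ_succ, hs.1, hs.2]
  · intro X _
    exact Fin.cons_self_tail X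
  · rintro ⟨⟨x, y⟩, Y⟩ hs
    simp only [mem_sigma, HasAntidiagonal.mem_antidiagonal, Finset.Nat.mem_antidiagonalTuple] at hs
    obtain ⟨_, rfl⟩ := hs
    simp
  · intro X _
    exact congrArg f (Fin.cons_self_tail X).symm

lemma sum_antidiagonal_left_comm (n : ℕ) (f : ℕ → ℕ → ℕ → ℝ) :
    ∑ x ∈ antidiagonal n, ∑ y ∈ antidiagonal x.2, f x.1 y.1 y.2 =
      ∑ y ∈ antidiagonal n, ∑ x ∈ antidiagonal y.2, f x.1 y.1 x.2 := by
  rw [Finset.sum_sigma', Finset.sum_sigma']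
  refine Finset.sum_nbij' (fun s => ⟨(s.2.1, s.1.1 + s.2.2), (s.1.1, s.2.2)⟩)
    (fun s => ⟨(s.2.1, s.1.1 + s.2.2), (s.1.1, s.2.2)⟩) ?_ ?_ ?_ ?_ ?_
  all_goals
    rintro ⟨⟨x, y⟩, ⟨u, v⟩⟩ hs
    simp only [mem_sigma, HasAntidiagonal.mem_antidiagonal] at hs
    obtain ⟨h1, rfl⟩ := hs
  · simp only [mem_sigma, HasAntidiagonal.mem_antidiagonal, and_true]
    omega
  · simp only [mem_sigma, HasAntidiagonal.mem_antidiagonal, and_true]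
    omega
  · rfl
  · rfl
  · rfl

lemma sum_antidiagonal_assoc (n : ℕ) (f : ℕ → ℕ → ℕ → ℝ) :
    ∑ x ∈ antidiagonal n, ∑ y ∈ antidiagonal x.2, f x.1 y.1 y.2 =
      ∑ x ∈ antidiagonal n, ∑ y ∈ antidiagonal x.1, f y.1 y.2 x.2 := by
  rw [Finset.sum_sigma', Finset.sum_sigma']
  refine Finset.sum_nbij' (fun s => ⟨(s.1.1 + s.2.1, s.2.2), (s.1.1, s.2.1)⟩)
    (fun s => ⟨(s.2.1, s.2.2 + s.1.2), (s.2.2, s.1.2)⟩) ?_ ?_ ?_ ?_ ?_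
  all_goals
    rintro ⟨⟨x, y⟩, ⟨u, v⟩⟩ hs
    simp only [mem_sigma, HasAntidiagonal.mem_antidiagonal] at hs
    obtain ⟨h1, rfl⟩ := hs
  · simp only [mem_sigma, HasAntidiagonal.mem_antidiagonal, and_true]
    omega
  · simp only [mem_sigma, HasAntidiagonal.mem_antidiagonal, and_true]
    omega
  · rfl
  · rfl
  · rfl

/-- The hockey-stick identity, for multiset coefficients. -/
lemma sum_antidiagonal_multichoose (k n : ℕ) :
    ∑ x ∈ antidiagonal n, (Nat.multichoose k x.1 : ℝ) = Nat.multichoose (k + 1) n := by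
  induction n with
  | zero => simp
  | succ n ih =>
    rw [Finset.Nat.sum_antidiagonal_succ', ih, Nat.multichoose_succ_succ]
    push_cast
    rfl

/-- The `(k+1)`-fold Abel–Cauchy identity: the sum depends on the shifts `a i` only through
their total. -/
lemma sum_prod_abelTerm (b : ℝ) (k : ℕ) : ∀ (n : ℕ) (a : Fin (k + 1) → ℝ),
    ∑ X ∈ Finset.Nat.antidiagonalTuple (k + 1) n, ∏ i, abelTerm b (a i) (X i) =
      ∑ x ∈ antidiagonal n, (Nat.multichoose k x.1 : ℝ) *
        (b ^ x.1 * ((∑ i, a i + n * b) ^ x.2 / (x.2.factorial : ℝ))) := by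
  induction k with
  | zero =>
    intro n a
    cases n with
    | zero => simp [abelTerm]
    | succ n =>
      rw [Finset.Nat.sum_antidiagonal_succ]
      simp [abelTerm, mul_comm]
  | succ k ih =>
    intro n a
    rw [sum_antidiagonalTuple_succ]
    simp only [Fin.prod_univ_succ (n := k + 1), Fin.sum_univ_succ (n := k + 1), Fin.cons_zero,
      Fin.cons_succ]
    simp_rw [← mul_sum, ih _ (fun i => a (Fin.succ i)), mul_sum]
    set A := ∑ i : Fin (k + 1), a (Fin.succ i) with hA
    calc ∑ x ∈ antidiagonal n, ∑ y ∈ antidiagonal x.2, abelTerm b (a 0) x.1 *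
          ((Nat.multichoose k y.1 : ℝ) * (b ^ y.1 * ((A + x.2 * b) ^ y.2 / (y.2.factorial : ℝ))))
        = ∑ x ∈ antidiagonal n, ∑ y ∈ antidiagonal x.2, abelTerm b (a 0) x.1 *
          ((Nat.multichoose k y.1 : ℝ) * (b ^ y.1 * abelTerm b (A + y.1 * b) y.2)) := by
          refine sum_congr rfl fun x _ => sum_congr rfl fun y hy => ?_
          have e : A + x.2 * b = A + y.1 * b + b * y.2 := by
            rw [← HasAntidiagonal.mem_antidiagonal.mp hy]; push_cast; ring
          rw [e, abelTerm.eq_def b (A + y.1 * b)]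
      _ = ∑ y ∈ antidiagonal n, ∑ x ∈ antidiagonal y.2, abelTerm b (a 0) x.1 *
          ((Nat.multichoose k y.1 : ℝ) * (b ^ y.1 * abelTerm b (A + y.1 * b) x.2)) :=
          sum_antidiagonal_left_comm n (fun p q r => abelTerm b (a 0) p *
          ((Nat.multichoose k q : ℝ) * (b ^ q * abelTerm b (A + q * b) r)))
      _ = ∑ y ∈ antidiagonal n, ∑ x ∈ antidiagonal y.2, (Nat.multichoose k y.1 : ℝ) *
          (b ^ (y.1 + x.1) * ((a 0 + A + n * b) ^ x.2 / (x.2.factorial : ℝ))) := by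
          refine sum_congr rfl fun y hy => ?_
          have h := sum_abelTerm_mul b y.2 (a 0) (A + y.1 * b)
          have e : a 0 + (A + y.1 * b) + y.2 * b = a 0 + A + n * b := by
            rw [← HasAntidiagonal.mem_antidiagonal.mp hy]; push_cast; ring
          rw [e] at h
          calc _ = (Nat.multichoose k y.1 : ℝ) * b ^ y.1 * ∑ x ∈ antidiagonal y.2,
                  abelTerm b (a 0) x.1 * abelTerm b (A + y.1 * b) x.2 := by
                rw [mul_sum]; exact sum_congr rfl fun x _ => by ring
            _ = _ := by
                rw [h, mul_sum]; exact sum_congr rfl fun x _ => by ring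
      _ = ∑ x ∈ antidiagonal n, ∑ y ∈ antidiagonal x.1, (Nat.multichoose k y.1 : ℝ) *
          (b ^ (y.1 + y.2) * ((a 0 + A + n * b) ^ x.2 / (x.2.factorial : ℝ))) :=
          sum_antidiagonal_assoc n (fun p q r => (Nat.multichoose k p : ℝ) *
          (b ^ (p + q) * ((a 0 + A + n * b) ^ r / (r.factorial : ℝ))))
      _ = _ := by
          refine sum_congr rfl fun x _ => ?_
          rw [← sum_antidiagonal_multichoose, sum_mul]
          exact sum_congr rfl fun y hy => by rw [HasAntidiagonal.mem_antidiagonal.mp hy]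

/-! ### The moment generating function -/

lemma multinomial_mul_prod (k n : ℕ) (X : Fin k → ℕ)
    (hX : X ∈ Finset.Nat.antidiagonalTuple k n) (g : Fin k → ℝ) :
    (Nat.multinomial Finset.univ X : ℝ) * ∏ i, g i =
      n.factorial * ∏ i, g i / ((X i).factorial : ℝ) := by
  have h := Nat.multinomial_spec Finset.univ X
  rw [Finset.Nat.mem_antidiagonalTuple.mp hX] at h
  rw [← h, prod_div_distrib]
  have h0 : (∏ i, ((X i).factorial : ℝ)) ≠ 0 := prod_ne_zero_iff.mpr fun i _ => by positivity
  push_cast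
  field_simp

/-- `G_{k,n}(λ, p)` does not depend on the probability vector `p`. -/
lemma Gfun_eq_Gpoly (k n : ℕ) (hk : 2 ≤ k) (hn : 1 ≤ n) (l : ℝ) (p : Fin k → ℝ)
    (hps : ∑ i, p i = 1) : Gfun k n l p = Gpoly k n l := by
  obtain ⟨k, rfl⟩ : ∃ m, k = m + 2 := ⟨k - 2, by omega⟩
  have hn0 : (n : ℝ) ≠ 0 := by positivity
  have hG : Gfun (k + 2) n l p = n.factorial *
      ∑ X ∈ Finset.Nat.antidiagonalTuple (k + 1 + 1) n,
        ∏ i, abelTerm (l / n) ((1 - l) * p i) (X i) := by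
    rw [Gfun, mul_sum]
    refine sum_congr rfl fun X hX => ?_
    rw [multinomial_mul_prod _ n X hX]
    congr 1
    refine prod_congr rfl fun i _ => ?_
    rw [abelTerm]
    congr 2
    ring
  have hone : ∑ i, (1 - l) * p i + n * (l / n) = 1 := by
    rw [← mul_sum, hps]; field_simp; ring
  rw [hG, sum_prod_abelTerm, hone, Gpoly, mul_sum,
    Finset.Nat.sum_antidiagonal_eq_sum_range_succ (fun i j => (n.factorial : ℝ) *
      ((Nat.multichoose (k + 1) i : ℝ) * ((l / n) ^ i * (1 ^ j / (j.factorial : ℝ)))))]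
  refine sum_congr rfl fun m _ => ?_
  have hc : Nat.multichoose (k + 1) m = (m + (k + 2) - 2).choose (k + 2 - 2) := by
    rw [Nat.multichoose_eq]
    have e1 : k + 1 + m - 1 = m + k := by omega
    have e2 : m + (k + 2) - 2 = m + k := by omega
    rw [e1, e2, Nat.add_sub_cancel, Nat.choose_symm_add]
  rw [hc, div_pow, one_pow]
  have h2 : ((n - m).factorial : ℝ) ≠ 0 := by positivity
  field_simp

/-- One coordinate of the tilted likelihood is controlled by weighted AM-GM. -/
lemma tilted_coord_le (n : ℕ) (hn : 1 ≤ n) (l p : ℝ) (hl0 : 0 ≤ l) (hl1 : l ≤ 1) (hp : 0 < p)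
    (x : ℕ) :
    p ^ x * Real.exp (l * (x * Real.log (x / (n * p)))) ≤ (l * x / n + (1 - l) * p) ^ x := by
  rcases Nat.eq_zero_or_pos x with rfl | hx
  · simp
  have hn0 : (0 : ℝ) < n := by exact_mod_cast hn
  have hx0 : (0 : ℝ) < x := by exact_mod_cast hx
  have hq : (0 : ℝ) < x / n := by positivity
  have e : l * (x * Real.log (x / (n * p))) = x * (l * Real.log (x / (n * p))) := by ring
  rw [e, Real.exp_nat_mul, ← mul_pow]
  refine pow_le_pow_left₀ (by positivity) ?_ x
  have h := Real.geom_mean_le_arith_mean2_weighted hl0 (sub_nonneg.mpr hl1) hq.le hp.le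
    (by ring : l + (1 - l) = 1)
  calc p * Real.exp (l * Real.log (x / (n * p)))
      = (x / n : ℝ) ^ l * p ^ (1 - l) := by
        rw [Real.rpow_def_of_pos hq, Real.rpow_def_of_pos hp, ← Real.exp_add, ← div_div,
          Real.log_div hq.ne' hp.ne']
        nth_rewrite 1 [← Real.exp_log hp]
        rw [← Real.exp_add]
        congr 1
        ring
    _ ≤ l * (x / n) + (1 - l) * p := h
    _ = l * x / n + (1 - l) * p := by ring

lemma phi_le_Gfun (k n : ℕ) (hn : 1 ≤ n) (l : ℝ) (hl0 : 0 ≤ l) (hl1 : l ≤ 1) (p : Fin k → ℝ)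
    (hp : ∀ i, 0 < p i) : phi k n l p ≤ Gfun k n l p := by
  refine sum_le_sum fun X _ => ?_
  have hn0 : (n : ℝ) ≠ 0 := by positivity
  have e : l * (n : ℝ) * relEnt k n p X =
      ∑ i, l * ((X i : ℝ) * Real.log ((X i : ℝ) / (n * p i))) := by
    rw [relEnt, mul_sum]
    refine sum_congr rfl fun i _ => ?_
    field_simp
  rw [multP, e, Real.exp_sum, mul_assoc, ← prod_mul_distrib]
  refine mul_le_mul_of_nonneg_left ?_ (Nat.cast_nonneg _)
  refine prod_le_prod (fun i _ => ?_) fun i _ => tilted_coord_le n hn l (p i) hl0 hl1 (hp i) (X i)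
  have := hp i
  positivity

lemma multP_nonneg (k : ℕ) (p : Fin k → ℝ) (hp : ∀ i, 0 < p i) (X : Fin k → ℕ) :
    0 ≤ multP k p X :=
  mul_nonneg (Nat.cast_nonneg _) (prod_nonneg fun i _ => pow_nonneg (hp i).le _)

/-- The Chernoff bound. -/
lemma tailP_le (k n : ℕ) (p : Fin k → ℝ) (hp : ∀ i, 0 < p i) (t l : ℝ) (hl : 0 ≤ l) :
    tailP k n p t ≤ Real.exp (-(l * t)) * phi k n l p := by
  classical
  rw [tailP, phi, mul_sum]
  refine (sum_le_sum fun X hX => ?_).trans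
    (sum_le_sum_of_subset_of_nonneg (filter_subset _ _) fun X _ _ => ?_)
  · have h := (mem_filter.mp hX).2
    have h1 : (1 : ℝ) ≤ Real.exp (-(l * t)) * Real.exp (l * n * relEnt k n p X) := by
      rw [← Real.exp_add]
      refine Real.one_le_exp ?_
      nlinarith
    nlinarith [multP_nonneg k p hp X]
  · exact mul_nonneg (Real.exp_nonneg _) (mul_nonneg (multP_nonneg k p hp X) (Real.exp_nonneg _))

theorem tail_bound_corrected (k n : ℕ) (hk : 2 ≤ k) (hn : 1 ≤ n)
    (p : Fin k → ℝ) (hp : ∀ i, 0 < p i) (hps : ∑ i, p i = 1)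
    (t : ℝ) (ht : (k : ℝ) - 1 < t) :
    tailP k n p t ≤
      Real.exp (-(min (1 - ((k : ℝ) - 1) / t +
          (k : ℝ) / ((k : ℝ) - 1) * (t - (k : ℝ) + 1) / (n : ℝ)) 1 * t)) *
        Gpoly k n (min (1 - ((k : ℝ) - 1) / t +
          (k : ℝ) / ((k : ℝ) - 1) * (t - (k : ℝ) + 1) / (n : ℝ)) 1) := by
  set l := min (1 - ((k : ℝ) - 1) / t +
          (k : ℝ) / ((k : ℝ) - 1) * (t - (k : ℝ) + 1) / (n : ℝ)) 1 with hl
  have hk1 : (0 : ℝ) < (k : ℝ) - 1 := by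
    have : (2 : ℝ) ≤ k := by exact_mod_cast hk
    linarith
  have ht0 : 0 < t := hk1.trans ht
  have hl0 : 0 ≤ l := by
    refine le_min ?_ zero_le_one
    have h1 : ((k : ℝ) - 1) / t ≤ 1 := (div_le_one ht0).mpr ht.le
    have h2 : 0 ≤ t - (k : ℝ) + 1 := by linarith
    have h3 : 0 ≤ (k : ℝ) / ((k : ℝ) - 1) * (t - (k : ℝ) + 1) / (n : ℝ) := by positivity
    linarith
  refine (tailP_le k n p hp t l hl0).trans (mul_le_mul_of_nonneg_left ?_ (Real.exp_nonneg _))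
  rw [← Gfun_eq_Gpoly k n hk hn l p hps]
  exact phi_le_Gfun k n hn l hl0 (min_le_right _ _) p hp
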